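/- arXiv:1804.10461 — 2 statements merged into one kernel-verified Lean document; each statement's English description precedes it below -/
import Mathlib

section
/- Let λ be a left-infinite word and ρ a right-infinite word over a finite alphabet A. The set OG_{λ,ρ} = {og_{λ,ρ}(n) : n ∈ ℕ} is finite if and only if there exist finite words u, w₁, w₂ over A (with u nonempty) such that λ = ∞u·w₁ = ⋯uuuw₁ and ρ = w₂·u∞ = w₂uuu⋯. -/
/-- The suffix of length `n` of the left-infinite word `⋯ (lam 2)(lam 1)(lam 0)`. -/
def lSuffix {A : Type*} (lam : ℕ → A) (n : ℕ) : List A := (List.range n).reverse.map lam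

/-- The prefix of length `n` of the right-infinite word `(rho 0)(rho 1)(rho 2) ⋯`. -/
def rPrefix {A : Type*} (rho : ℕ → A) (n : ℕ) : List A := (List.range n).map rho

/-- The left overlap gap between two finite words. -/
noncomputable def logGap {A : Type*} (u v : List A) : ℕ :=
  sInf {n | ∃ x x' : List A, x.length = n ∧ x'.length = n ∧ u ++ x = x' ++ v}

/-- The right overlap gap between two finite words. -/
noncomputable def rogGap {A : Type*} (u v : List A) : ℕ :=
  sInf {n | ∃ x x' : List A, x.length = n ∧ x'.length = n ∧ x ++ u = v ++ x'}

/-- The overlap gap between two finite words. -/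
noncomputable def ogGap {A : Type*} (u v : List A) : ℕ := min (logGap u v) (rogGap u v)

/-- `lam` is the left-infinite word `∞u·w = ⋯uuuw`. -/
def IsLeftUP {A : Type*} (lam : ℕ → A) (u w : List A) : Prop :=
  ∀ k : ℕ, lSuffix lam (w.length + k * u.length) = (List.replicate k u).flatten ++ w

/-- `rho` is the right-infinite word `w·u∞ = wuuu⋯`. -/
def IsRightUP {A : Type*} (rho : ℕ → A) (w u : List A) : Prop :=
  ∀ k : ℕ, rPrefix rho (w.length + k * u.length) = w ++ (List.replicate k u).flatten

theorem lSuffix_eq_rev {A : Type*} (lam : ℕ → A) (n : ℕ) :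
    lSuffix lam n = (rPrefix lam n).reverse := by
  simp [lSuffix, rPrefix, List.map_reverse]

theorem rPrefix_add {A : Type*} (f : ℕ → A) (a b : ℕ) :
    rPrefix f (a + b) = rPrefix f a ++ rPrefix (fun i => f (a + i)) b := by
  simp [rPrefix, List.range_add, List.map_map, Function.comp_def]

theorem rPrefix_len {A : Type*} (f : ℕ → A) (n : ℕ) : (rPrefix f n).length = n := by
  simp [rPrefix]

theorem lSuffix_len {A : Type*} (f : ℕ → A) (n : ℕ) : (lSuffix f n).length = n := by
  simp [lSuffix]

theorem flat_succ {A : Type*} (u : List A) (k : ℕ) :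
    (List.replicate (k+1) u).flatten = (List.replicate k u).flatten ++ u := by
  rw [List.replicate_succ']; simp

theorem rightUP_get {A : Type*} {rho : ℕ → A} {w u : List A} (h : IsRightUP rho w u)
    (k i : ℕ) (hi : i < u.length) : rho (w.length + k * u.length + i) = u[i] := by
  have h1 := h k
  have h2 := h (k+1)
  rw [Nat.succ_mul, ← Nat.add_assoc, rPrefix_add, h1, flat_succ, ← List.append_assoc] at h2
  have h3 := List.append_cancel_left h2
  have h4 : (rPrefix (fun i => rho (w.length + k * u.length + i)) u.length)[i]? = u[i]? := by
    rw [h3]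
  simpa [rPrefix, hi] using h4

theorem rightUP_of {A : Type*} {rho : ℕ → A} (N d : ℕ)
    (h : ∀ a, N ≤ a → rho (a + d) = rho a) :
    IsRightUP rho (rPrefix rho N) (rPrefix (fun i => rho (N + i)) d) := by
  intro k
  rw [rPrefix_len, rPrefix_len]
  induction k with
  | zero => simp
  | succ k ih =>
    rw [Nat.succ_mul, ← Nat.add_assoc, rPrefix_add, ih, flat_succ, ← List.append_assoc]
    congr 1
    have : ∀ k i, rho (N + k * d + i) = rho (N + i) := by
      intro k i
      induction k with
      | zero => simp
      | succ k ih => rw [← ih, ← h (N + k * d + i) (by omega)]; congr 1; ring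
    simp [rPrefix, this]

theorem leftUP_iff {A : Type*} (lam : ℕ → A) (u w : List A) :
    IsLeftUP lam u w ↔ IsRightUP lam w.reverse u.reverse := by
  unfold IsLeftUP IsRightUP
  refine forall_congr' fun k => ?_
  rw [lSuffix_eq_rev, List.reverse_eq_iff]
  simp [List.reverse_flatten]

theorem og_extract {A : Type*} (lam rho : ℕ → A) (K m : ℕ)
    (h : ogGap (lSuffix lam (m+K+1)) (rPrefix rho (m+K+1)) ≤ K) :
    ∃ s, m ≤ s ∧ s ≤ m + 2 * K ∧ ∀ a b, K ≤ a → K ≤ b → a + b = s → rho a = lam b := by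
  rcases min_le_iff.1 h with h | h
  · have hm := Nat.sInf_mem (s := {n | ∃ x x' : List A, x.length = n ∧ x'.length = n ∧
      (lSuffix lam (m+K+1)) ++ x = x' ++ (rPrefix rho (m+K+1))})
      ⟨m+K+1, rPrefix rho (m+K+1), lSuffix lam (m+K+1), rPrefix_len _ _, lSuffix_len _ _, rfl⟩
    obtain ⟨x, x', hx, hx', he⟩ := hm
    change x.length = logGap _ _ at hx
    change x'.length = logGap _ _ at hx'
    generalize logGap _ _ = k at *
    refine ⟨m + K - k, by omega, by omega, fun a b ha hb hab => ?_⟩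
    have h4 := congrArg (fun l => l[a + k]?) he
    beta_reduce at h4
    rw [List.getElem?_append_left (by rw [lSuffix_len]; omega),
      List.getElem?_append_right (by omega)] at h4
    rw [hx'] at h4
    have e : a + k - k = a := by omega
    have h5 : a + k < m + K + 1 := by omega
    have h6 : a < m + K + 1 := by omega
    have h7 : m + K + 1 - 1 - (a + k) = b := by omega
    rw [e, List.getElem?_eq_getElem (by rw [lSuffix_len]; omega),
      List.getElem?_eq_getElem (by rw [rPrefix_len]; omega)] at h4
    simp only [lSuffix, rPrefix, List.getElem_map, List.getElem_reverse, List.getElem_range,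
      List.length_range, Option.some.injEq] at h4
    rw [h7] at h4
    exact h4.symm
  · have hm := Nat.sInf_mem (s := {n | ∃ x x' : List A, x.length = n ∧ x'.length = n ∧
      x ++ (lSuffix lam (m+K+1)) = (rPrefix rho (m+K+1)) ++ x'})
      ⟨m+K+1, rPrefix rho (m+K+1), lSuffix lam (m+K+1), rPrefix_len _ _, lSuffix_len _ _, rfl⟩
    obtain ⟨x, x', hx, hx', he⟩ := hm
    change x.length = rogGap _ _ at hx
    change x'.length = rogGap _ _ at hx'
    generalize rogGap _ _ = k at *
    refine ⟨m + K + k, by omega, by omega, fun a b ha hb hab => ?_⟩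
    have h4 := congrArg (fun l => l[a]?) he
    beta_reduce at h4
    rw [List.getElem?_append_right (by omega), 
      List.getElem?_append_left (by rw [rPrefix_len]; omega)] at h4
    rw [hx] at h4
    have h7 : m + K + 1 - 1 - (a - k) = b := by omega
    rw [List.getElem?_eq_getElem (by rw [lSuffix_len]; omega),
      List.getElem?_eq_getElem (by rw [rPrefix_len]; omega)] at h4
    simp only [lSuffix, rPrefix, List.getElem_map, List.getElem_reverse, List.getElem_range,
      List.length_range, Option.some.injEq] at h4
    rw [h7] at h4
    exact h4.symm

theorem og_le_len {A : Type*} (lam rho : ℕ → A) (n : ℕ) :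
    ogGap (lSuffix lam n) (rPrefix rho n) ≤ n :=
  (min_le_left _ _).trans (Nat.sInf_le
    ⟨rPrefix rho n, lSuffix lam n, rPrefix_len _ _, lSuffix_len _ _, rfl⟩)

theorem og_le {A : Type*} (lam rho : ℕ → A) (n k : ℕ) (hk : k ≤ n)
    (h : ∀ a b, k ≤ a → k ≤ b → a + b + 1 = n + k → rho a = lam b) :
    ogGap (lSuffix lam n) (rPrefix rho n) ≤ k := by
  refine (min_le_right _ _).trans (Nat.sInf_le
    ⟨(rPrefix rho n).take k, (lSuffix lam n).drop (n-k), ?_, ?_, ?_⟩)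
  · rw [List.length_take, rPrefix_len]; omega
  · rw [List.length_drop, lSuffix_len]; omega
  · have e : (lSuffix lam n).take (n-k) = (rPrefix rho n).drop k := by
      apply List.ext_getElem
      · rw [List.length_take, List.length_drop, lSuffix_len, rPrefix_len]; omega
      · intro i h1 h2
        rw [List.length_drop, rPrefix_len] at h2
        simp only [lSuffix, rPrefix, List.getElem_map, List.getElem_reverse, List.getElem_range,
          List.length_range, List.getElem_take, List.getElem_drop]
        exact (h _ _ (by omega) (by omega) (by omega)).symm
    conv_lhs => rw [← List.take_append_drop (n-k) (lSuffix lam n), e]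
    rw [← List.append_assoc, List.take_append_drop]

/-- `OG_{λ,ρ}` is finite iff `λ = ∞u·w₁` and `ρ = w₂·u∞` for some words `u, w₁, w₂`
with `u` nonempty. -/
theorem og_finite_iff {A : Type*} [Fintype A] [Nonempty A] (lam rho : ℕ → A) :
    (Set.range fun n => ogGap (lSuffix lam n) (rPrefix rho n)).Finite ↔
      ∃ u w₁ w₂ : List A, u ≠ [] ∧ IsLeftUP lam u w₁ ∧ IsRightUP rho w₂ u := by
  constructor
  · intro hf
    obtain ⟨K, hK⟩ := hf.bddAbove
    have hK' : ∀ n, ogGap (lSuffix lam n) (rPrefix rho n) ≤ K := fun n => hK ⟨n, rfl⟩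
    have hs := fun m => og_extract lam rho K m (hK' _)
    set P : ℕ → Prop := fun s => ∀ a b, K ≤ a → K ≤ b → a + b = s → rho a = lam b with hP
    have hd : ∃ d, 0 < d ∧ ∀ M, ∃ s, M ≤ s ∧ P s ∧ P (s + d) := by
      by_contra hcon
      push Not at hcon
      have : ∀ d, ∃ M, 0 < d → ∀ s, M ≤ s → P s → ¬ P (s + d) := by
        intro d
        rcases Nat.eq_zero_or_pos d with h | h
        · exact ⟨0, fun h' => by omega⟩
        · obtain ⟨M, hM⟩ := hcon d h
          exact ⟨M, fun _ => hM⟩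
      choose F hF using this
      obtain ⟨s, h1, h2, h3⟩ := hs ((Finset.range (2*K+2)).sup F)
      obtain ⟨t, g1, g2, g3⟩ := hs (s+1)
      have hle : F (t - s) ≤ (Finset.range (2*K+2)).sup F :=
        Finset.le_sup (f := F) (Finset.mem_range.2 (by omega))
      refine hF (t - s) (by omega) s (hle.trans h1) h3 ?_
      rwa [show s + (t - s) = t by omega]
    obtain ⟨d, hd0, hd⟩ := hd
    have hr : ∀ a, K ≤ a → rho (a + d) = rho a := by
      intro a ha
      obtain ⟨s, h1, h2, h3⟩ := hd (a + K)
      rw [h2 a (s - a) ha (by omega) (by omega),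
        h3 (a + d) (s - a) (by omega) (by omega) (by omega)]
    have hl : ∀ a, K ≤ a → lam (a + d) = lam a := by
      intro a ha
      obtain ⟨s, h1, h2, h3⟩ := hd (a + K)
      rw [← h2 (s - a) a (by omega) ha (by omega),
        ← h3 (s - a) (a + d) (by omega) (by omega) (by omega)]
    obtain ⟨s, h1, h2, -⟩ := hd (2 * K + d)
    have hR := rightUP_of (rho := rho) (s - K + 1 - d) d (fun a ha => hr a (by omega))
    refine ⟨_, (rPrefix lam K).reverse, _, ?_, ?_, hR⟩
    · intro h
      have := congrArg List.length h
      rw [rPrefix_len] at this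
      simp at this
      omega
    · rw [leftUP_iff, List.reverse_reverse]
      convert rightUP_of (rho := lam) K d hl using 1
      apply List.ext_getElem
      · simp [rPrefix_len]
      · intro i g1 g2
        rw [rPrefix_len] at g2
        simp only [rPrefix, List.getElem_map, List.getElem_reverse, List.getElem_range,
          List.length_range, List.length_map]
        exact h2 _ _ (by omega) (by omega) (by omega)
  · rintro ⟨u, w₁, w₂, hu, hl, hr⟩
    rw [leftUP_iff] at hl
    have hp : 0 < u.length := List.length_pos_iff.2 hu
    set p := u.length with hpd
    have key : ∀ a b q, w₂.length ≤ a → w₁.length ≤ b →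
        a + b + 1 = w₁.length + w₂.length + q * p → rho a = lam b := by
      intro a b q ha hb hab
      obtain ⟨j, rfl⟩ := Nat.exists_eq_add_of_le ha
      obtain ⟨j', rfl⟩ := Nat.exists_eq_add_of_le hb
      have e1 := Nat.div_add_mod' j p
      have e2 := Nat.div_add_mod' j' p
      have l1 := Nat.mod_lt j hp
      have l2 := Nat.mod_lt j' hp
      have r1 := rightUP_get hr (j / p) (j % p) l1
      have r2 := rightUP_get hl (j' / p) (j' % p) (by simpa using l2)
      rw [List.getElem_reverse] at r2
      simp only [List.length_reverse, ← hpd] at r2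
      rw [← hpd] at r1
      rw [Nat.add_assoc, e1] at r1
      rw [Nat.add_assoc, e2] at r2
      rw [r1, r2]
      have e3 : j % p + j' % p + 1 = p := by
        have hdv : p ∣ j % p + j' % p + 1 := by
          have h0 : p ∣ (j / p * p + j' / p * p) + (j % p + j' % p + 1) :=
            ⟨q, by rw [Nat.mul_comm p q]; omega⟩
          exact (Nat.dvd_add_right (Dvd.dvd.add (Dvd.intro_left _ rfl) (Dvd.intro_left _ rfl))).1 h0
        obtain ⟨c, hc⟩ := hdv
        have c1 : c < 2 := by
          by_contra hh
          have := Nat.mul_le_mul_left p (show 2 ≤ c by omega)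
          omega
        have c0 : c ≠ 0 := by rintro rfl; simp at hc
        have : c = 1 := by omega
        subst this
        omega
      congr 1
      omega
    set M := w₁.length + w₂.length with hM
    refine (Set.finite_Iic (M + p)).subset ?_
    rintro _ ⟨n, rfl⟩
    simp only [Set.mem_Iic]
    by_cases hn : n ≤ M + p
    · exact (og_le_len lam rho n).trans hn
    · have l1 := Nat.mod_lt n hp
      have e1 := Nat.div_add_mod' n p
      have hk : M + (p - n % p) ≤ M + p := by omega
      refine (og_le lam rho n (M + (p - n % p)) (by omega) ?_).trans hk
      intro a b ha hb hab
      refine key a b (n / p + 1) (by omega) (by omega) ?_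
      rw [Nat.succ_mul]
      omega
end

section
/- Let λ and ρ be two left-infinite words over a finite alphabet A, and for n ∈ ℕ let λ_n and ρ_n denote their suffixes of length n. Then the set OG_{λ,ρ} = {og(λ_n, ρ_n) : n ∈ ℕ} is finite if and only if there exists a finite word w over A such that ρ = λw or λ = ρw. -/
theorem aux_mem {A : Type*} (lam rho : ℕ → A) (n k : ℕ) :
    (∃ x x' : List A, x.length = k ∧ x'.length = k ∧
      lSuffix lam n ++ x = x' ++ lSuffix rho n) ↔ ∀ i, k + i < n → rho (k + i) = lam i := by
  unfold lSuffix
  constructor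
  · rintro ⟨x, x', hx, hx', h⟩ i hi
    have h2 := congrArg (fun l => l.reverse[k + i]?) h
    simp only [List.reverse_append, ← List.map_reverse, List.reverse_reverse] at h2
    rw [List.getElem?_append_right (by simp [hx]), List.getElem?_append_left (by simpa using hi)] at h2
    have hi' : i < n := by omega
    simp [hx, hi, hi'] at h2
    exact h2.symm
  · intro h
    let m : ℕ → A := fun j => if j < k then rho j else lam (j - k)
    refine ⟨((List.range k).map m).reverse, ((List.range k).map fun i => m (n + i)).reverse,
      by simp, by simp, ?_⟩
    apply List.reverse_injective
    simp only [List.reverse_append, ← List.map_reverse, List.reverse_reverse]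
    apply List.ext_getElem
    · simp [add_comm]
    · intro j h1 h2
      simp only [List.length_append, List.length_map, List.length_range] at h1 h2
      have hm : ∀ j, j < n → m j = rho j := by
        intro j hj
        by_cases hk : j < k
        · simp [m, hk]
        · have := h (j - k) (by omega)
          rw [Nat.add_sub_cancel' (by omega)] at this
          simp [m, hk, this]
      have e1 : ∀ j, ¬ j < k → m j = lam (j - k) := fun j hj => by simp [m, hj]
      simp only [List.getElem_append, List.getElem_map, List.getElem_range, List.length_map,
        List.length_range]
      split_ifs with a b b
      · exact hm _ b
      · rw [Nat.add_sub_cancel' (by omega)]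
      · rw [← e1 _ a, hm _ b]
      · rw [Nat.add_sub_cancel' (by omega), e1 _ a]

theorem aux_log {A : Type*} (lam rho : ℕ → A) (n : ℕ) :
    logGap (lSuffix lam n) (lSuffix rho n) =
      sInf {k | ∀ i, k + i < n → rho (k + i) = lam i} := by
  unfold logGap
  simp only [aux_mem]

theorem aux_rog {A : Type*} (u v : List A) : rogGap u v = logGap v u := by
  unfold rogGap logGap
  congr 1
  ext n
  constructor <;> rintro ⟨x, x', h1, h2, h3⟩ <;> exact ⟨x', x, h2, h1, h3.symm⟩

theorem aux_spec {A : Type*} (lam rho : ℕ → A) (n : ℕ) :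
    ∀ i, logGap (lSuffix lam n) (lSuffix rho n) + i < n →
      rho (logGap (lSuffix lam n) (lSuffix rho n) + i) = lam i := by
  rw [aux_log]
  exact Nat.sInf_mem (s := {k | ∀ i, k + i < n → rho (k + i) = lam i}) ⟨n, fun i hi => by omega⟩

theorem aux_le {A : Type*} (lam rho : ℕ → A) (n k : ℕ) (h : ∀ i, rho (k + i) = lam i) :
    logGap (lSuffix lam n) (lSuffix rho n) ≤ k := by
  rw [aux_log]
  exact Nat.sInf_le fun i _ => h i

/-- For two left-infinite words `λ, ρ`, the set `OG_{λ,ρ} = {og(λ_n, ρ_n) : n ∈ ℕ}`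
(with `λ_n, ρ_n` suffixes of length `n`) is finite iff `ρ = λw` or `λ = ρw` for some
finite word `w`. -/
theorem og_finite_iff_left {A : Type*} [Fintype A] [Nonempty A] (lam rho : ℕ → A) :
    (Set.range fun n => ogGap (lSuffix lam n) (lSuffix rho n)).Finite ↔
      ∃ w : List A,
        (lSuffix rho w.length = w ∧ ∀ i, rho (w.length + i) = lam i) ∨
        (lSuffix lam w.length = w ∧ ∀ i, lam (w.length + i) = rho i) := by
  constructor
  · intro hf
    by_contra hc
    have hl : ∀ (r : ℕ → A) (k : ℕ), (lSuffix r k).length = k := by simp [lSuffix]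
    have key : ∀ k, (∃ i, rho (k + i) ≠ lam i) ∧ (∃ i, lam (k + i) ≠ rho i) := by
      intro k
      constructor
      · by_contra! h
        exact hc ⟨lSuffix rho k, Or.inl (by rw [hl]; exact ⟨rfl, h⟩)⟩
      · by_contra! h
        exact hc ⟨lSuffix lam k, Or.inr (by rw [hl]; exact ⟨rfl, h⟩)⟩
    choose f hF g hG using fun k => (⟨(key k).1.choose, (key k).1.choose_spec,
      (key k).2.choose, (key k).2.choose_spec⟩ :
      ∃ a, rho (k + a) ≠ lam a ∧ ∃ b, lam (k + b) ≠ rho b)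
    obtain ⟨N, hN⟩ := (hf.image fun k => k + f k + g k).bddAbove
    have hb := hN (Set.mem_image_of_mem _ (Set.mem_range_self (N + 1)))
    rcases min_choice (logGap (lSuffix lam (N + 1)) (lSuffix rho (N + 1)))
      (rogGap (lSuffix lam (N + 1)) (lSuffix rho (N + 1))) with h | h
    · rw [ogGap, h] at hb
      exact hF _ (aux_spec lam rho (N + 1) _ (by omega))
    · rw [ogGap, h, aux_rog] at hb
      exact hG _ (aux_spec rho lam (N + 1) _ (by omega))
  · rintro ⟨w, ⟨-, h⟩ | ⟨-, h⟩⟩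
    · refine (Set.finite_Iic w.length).subset ?_
      rintro _ ⟨n, rfl⟩
      exact (min_le_left _ _).trans (aux_le lam rho n _ h)
    · refine (Set.finite_Iic w.length).subset ?_
      rintro _ ⟨n, rfl⟩
      refine (min_le_right _ _ : ogGap _ _ ≤ _).trans ?_
      rw [aux_rog]
      exact aux_le rho lam n _ h
end
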